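/- arXiv:2105.04377 — 5 statements merged into one kernel-verified Lean document; each statement's English description precedes it below -/
import Mathlib

section
/- Let (X,d) be a complete and locally compact length space. Then the set of points x ∈ X at which strong geodesic extendibility holds is a closed subset of X. -/
open Metric Set

/-- A (pseudo-e)metric space is a *length space* if the distance between any two points
equals the infimum of the lengths of continuous curves joining them. -/
def IsLengthSpace (X : Type*) [PseudoEMetricSpace X] : Prop :=
  ∀ x y : X, edist x y =
    ⨅ (γ : ℝ → X) (_ : ContinuousOn γ (Set.Icc (0:ℝ) 1)) (_ : γ 0 = x) (_ : γ 1 = y),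
      eVariationOn γ (Set.Icc (0:ℝ) 1)

/-- A *geodesic segment* defined on `[0,a]`: a curve realizing distance,
parameterized by arc length. -/
def IsGeodesicSegment {X : Type*} [PseudoMetricSpace X] (γ : ℝ → X) (a : ℝ) : Prop :=
  ∀ u ∈ Set.Icc (0:ℝ) a, ∀ v ∈ Set.Icc (0:ℝ) a, dist (γ u) (γ v) = |u - v|

/-- *Strong geodesic extendibility* at `x`: for every `r > 0` and every `y ≠ x` there is a
point `p` with `d(x,p) = r` and a geodesic segment from `y` through `x` to `p`. -/
def StrongGeodesicExtendibilityAt {X : Type*} [PseudoMetricSpace X] (x : X) : Prop :=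
  ∀ r > (0:ℝ), ∀ y : X, y ≠ x → ∃ (p : X) (γ : ℝ → X),
    dist x p = r ∧ IsGeodesicSegment γ (dist x y + r) ∧
    γ 0 = y ∧ γ (dist x y) = x ∧ γ (dist x y + r) = p

lemma approx_pt {X : Type*} [MetricSpace X] (hX : IsLengthSpace X) (x y : X) (a b : ℝ)
    (ha : 0 ≤ a) (hb : 0 < b) (h : dist x y < a + b) : ∃ z, dist x z ≤ a ∧ dist z y < b := by
  by_cases hle : dist x y ≤ a
  · exact ⟨y, hle, by simpa using hb⟩
  push Not at hle
  have h1 : edist x y < ENNReal.ofReal (a + b) := by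
    rw [edist_dist]
    exact (ENNReal.ofReal_lt_ofReal_iff (by linarith)).2 h
  rw [hX x y] at h1
  simp only [iInf_lt_iff] at h1
  obtain ⟨γ, hc, h0, h1', hv⟩ := h1
  have hcd : ContinuousOn (fun t => dist x (γ t)) (Icc (0:ℝ) 1) := by fun_prop
  have := intermediate_value_Icc (zero_le_one) hcd
  obtain ⟨t, ht, hta⟩ := this (show a ∈ _ by simp [h0, h1', ha, hle.le])
  have hta : dist x (γ t) = a := hta
  refine ⟨γ t, hta.le, ?_⟩
  have hs := eVariationOn.Icc_add_Icc γ (s := univ) ht.1 ht.2 (mem_univ t)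
  simp only [univ_inter] at hs
  have e1 : edist x (γ t) ≤ eVariationOn γ (Icc 0 t) := by
    rw [← h0]
    exact eVariationOn.edist_le γ (by simp [ht.1]) (by simp [ht.1])
  have e2 : edist (γ t) y ≤ eVariationOn γ (Icc t 1) := by
    rw [← h1']
    exact eVariationOn.edist_le γ (by simp [ht.2]) (by simp [ht.2])
  have e3 : edist x (γ t) + edist (γ t) y < ENNReal.ofReal (a + b) :=
    lt_of_le_of_lt (add_le_add e1 e2) (hs ▸ hv)
  rw [edist_dist, edist_dist, ← ENNReal.ofReal_add dist_nonneg dist_nonneg,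
    ENNReal.ofReal_lt_ofReal_iff (by linarith)] at e3
  linarith

lemma proper_of_length {X : Type*} [MetricSpace X] [CompleteSpace X]
    [LocallyCompactSpace X] (hX : IsLengthSpace X) (x : X) (r : ℝ) :
    IsCompact (closedBall x r) := by
  by_contra hr
  have mono : ∀ s t : ℝ, s ≤ t → IsCompact (closedBall x t) → IsCompact (closedBall x s) :=
    fun s t hst ht => ht.of_isClosed_subset isClosed_closedBall (closedBall_subset_closedBall hst)
  let S : Set ℝ := {s | IsCompact (closedBall x s)}
  have h0 : (0:ℝ) ∈ S := by simp [S]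
  have hb : BddAbove S := by
    refine ⟨r, fun s hs => ?_⟩
    by_contra hlt
    exact hr (mono r s (by linarith) hs)
  have hR0 : 0 ≤ sSup S := le_csSup hb h0
  have hlt : ∀ s < sSup S, IsCompact (closedBall x s) := fun s hs => by
    obtain ⟨t, ht, hst⟩ := exists_lt_of_lt_csSup ⟨0, h0⟩ hs
    exact mono s t hst.le ht
  have hRS : IsCompact (closedBall x (sSup S)) := by
    rcases hR0.eq_or_lt with h | h
    · rw [← h]; exact h0
    refine isCompact_iff_totallyBounded_isComplete.2 ⟨?_, isClosed_closedBall.isComplete⟩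
    rw [Metric.totallyBounded_iff]
    intro ε hε
    have hm : 0 < min (ε / 4) (sSup S) := lt_min (by linarith) h
    have hm1 := min_le_left (ε / 4) (sSup S)
    have hm2 := min_le_right (ε / 4) (sSup S)
    obtain ⟨t, htf, ht⟩ := Metric.totallyBounded_iff.1
      (hlt (sSup S - min (ε / 4) (sSup S)) (by linarith)).totallyBounded (ε / 2) (by linarith)
    refine ⟨t, htf, fun y hy => ?_⟩
    rw [mem_closedBall'] at hy
    obtain ⟨z, hz, hzy⟩ := approx_pt hX x y (sSup S - min (ε / 4) (sSup S)) (ε / 2)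
      (by linarith) (by linarith) (by linarith)
    have := ht (mem_closedBall'.2 hz)
    simp only [mem_iUnion, mem_ball] at this ⊢
    obtain ⟨c, hc, hzc⟩ := this
    refine ⟨c, hc, ?_⟩
    have := dist_triangle y z c
    rw [dist_comm y z] at this
    linarith
  obtain ⟨δ, hδ, hK⟩ := hRS.exists_isCompact_cthickening
  have : sSup S + δ / 2 ∈ S := by
    refine hK.of_isClosed_subset isClosed_closedBall fun y hy => ?_
    rw [mem_closedBall'] at hy
    obtain ⟨z, hz, hzy⟩ := approx_pt hX x y (sSup S) δ hR0 hδ (by linarith)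
    rw [dist_comm] at hzy
    exact mem_cthickening_of_dist_le y z δ _ (mem_closedBall'.2 hz) hzy.le
  have := le_csSup hb this
  linarith

/-- In a complete, locally compact length space, the set of points at which
strong geodesic extendibility holds is closed. -/
theorem isClosed_strongGeodesicExtendibility {X : Type*} [MetricSpace X] [CompleteSpace X]
    [LocallyCompactSpace X] (hX : IsLengthSpace X) :
    IsClosed {x : X | StrongGeodesicExtendibilityAt x} := by
  rw [isClosed_iff_ultrafilter]
  intro x U hU hS r hr y hy
  have key : ∀ x' : X, ∃ γ : ℝ → X, StrongGeodesicExtendibilityAt x' ∧ y ≠ x' →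
      IsGeodesicSegment γ (dist x' y + r) ∧ γ 0 = y ∧ γ (dist x' y) = x' := by
    intro x'
    by_cases h : StrongGeodesicExtendibilityAt x' ∧ y ≠ x'
    · obtain ⟨p, γ, h1, h2, h3, h4, h5⟩ := h.1 r hr y h.2
      exact ⟨γ, fun _ => ⟨h2, h3, h4⟩⟩
    · exact ⟨fun _ => y, fun h' => absurd h' h⟩
  choose G hG using key
  have hne : ∀ᶠ x' in (U : Filter X), y ≠ x' := hU (isOpen_ne.mem_nhds hy.symm |> fun h => by
    filter_upwards [h] with a ha using ha.symm)
  have hev : ∀ᶠ x' in (U : Filter X), IsGeodesicSegment (G x') (dist x' y + r) ∧ G x' 0 = y ∧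
      G x' (dist x' y) = x' := by
    filter_upwards [hS, hne] with a h1 h2 using hG a ⟨h1, h2⟩
  have hid : Filter.Tendsto (fun a : X => a) (U : Filter X) (nhds x) := hU
  have hL : Filter.Tendsto (fun a : X => dist a y) (U : Filter X) (nhds (dist x y)) :=
    hid.dist tendsto_const_nhds
  have hm : ∀ t : ℝ, Filter.Tendsto (fun a : X => min t (dist a y + r)) (U : Filter X)
      (nhds (min t (dist x y + r))) := fun t => tendsto_const_nhds.min (hL.add_const r)
  have hI : ∀ t : ℝ, 0 ≤ t → ∀ a : X, min t (dist a y + r) ∈ Icc 0 (dist a y + r) :=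
    fun t ht a => ⟨le_min ht (by positivity), min_le_right _ _⟩
  have hlim : ∀ t : ℝ, ∃ z, 0 ≤ t →
      Filter.Tendsto (fun a => G a (min t (dist a y + r))) (U : Filter X) (nhds z) := by
    intro t
    by_cases ht : 0 ≤ t
    · have hc := proper_of_length hX y t
      obtain ⟨z, -, hz⟩ := hc.ultrafilter_le_nhds'
        (U.map (fun a => G a (min t (dist a y + r)))) (by
          rw [Ultrafilter.mem_map]
          filter_upwards [hev] with a ⟨h1, h2, h3⟩
          have h := h1 _ (hI t ht a) 0 ⟨le_rfl, by positivity⟩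
          rw [h2, sub_zero, abs_of_nonneg (hI t ht a).1] at h
          simp only [mem_preimage, mem_closedBall, h]
          exact min_le_left _ _)
      exact ⟨z, fun _ => hz⟩
    · exact ⟨y, fun h => absurd h ht⟩
  choose γ hγ using hlim
  have hd : (0:ℝ) ≤ dist x y := dist_nonneg
  have hgeo : IsGeodesicSegment γ (dist x y + r) := by
    intro u hu v hv
    have h1 := (hγ u hu.1).dist (hγ v hv.1)
    have h2 := ((hm u).sub (hm v)).abs
    rw [min_eq_left hu.2, min_eq_left hv.2] at h2
    refine tendsto_nhds_unique (h1.congr' ?_) h2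
    filter_upwards [hev] with a ⟨g1, g2, g3⟩
    exact g1 _ (hI u hu.1 a) _ (hI v hv.1 a)
  have hx : γ (dist x y) = x := by
    have h1 := (hγ (dist x y) hd).dist hid
    have h2 := ((hm (dist x y)).sub hL).abs
    rw [min_eq_left (by linarith), sub_self, abs_zero] at h2
    refine dist_eq_zero.1 (tendsto_nhds_unique (h1.congr' ?_) h2)
    filter_upwards [hev] with a ⟨g1, g2, g3⟩
    have := g1 _ (hI _ hd a) (dist a y) ⟨dist_nonneg, by linarith⟩
    rwa [g3] at this
  refine ⟨γ (dist x y + r), γ, ?_, hgeo, ?_, hx, rfl⟩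
  · have := hgeo (dist x y) ⟨hd, by linarith⟩ (dist x y + r) ⟨by linarith, le_rfl⟩
    rw [hx] at this
    rw [this, sub_add_cancel_left, abs_neg, abs_of_pos hr]
  · refine tendsto_nhds_unique (hγ 0 le_rfl) (tendsto_const_nhds.congr' ?_)
    filter_upwards [hev] with a ⟨g1, g2, g3⟩
    rw [min_eq_left (by positivity), g2]
end

section
/- Let d and (d_n)_{n∈ℕ} be metrics on a set X making X a locally compact length space (for each metric), such that d_n converges uniformly to d, i.e. sup_{(a,b)∈X×X} |d_n(a,b) − d(a,b)| → 0. Then for all x, y ∈ X and t, s ≥ 0, the Hausdorff distances of closed balls converge: d_H(B̄_t(x), B̄_s(y)) = lim_{n→∞} d_H^n(B̄ⁿ_t(x), B̄ⁿ_s(y)), where B̄ⁿ and d_H^n denote closed balls and Hausdorff distance with respect to d_n, and B̄, d_H those with respect to d. -/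
open Metric Set

/-- The distance function of an explicit metric-space structure. -/
def mdist {X : Type*} (m : MetricSpace X) (x y : X) : ℝ :=
  @dist X m.toPseudoMetricSpace.toDist x y

/-- The closed ball of an explicit metric-space structure. -/
def mClosedBall {X : Type*} (m : MetricSpace X) (x : X) (r : ℝ) : Set X :=
  @Metric.closedBall X m.toPseudoMetricSpace x r

/-- The Hausdorff distance of an explicit metric-space structure. -/
noncomputable def mHausdorffDist {X : Type*} (m : MetricSpace X) (A B : Set X) : ℝ :=
  @Metric.hausdorffDist X m.toPseudoMetricSpace A B

/-- `(X, m)` is locally compact. -/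
def mLocallyCompact {X : Type*} (m : MetricSpace X) : Prop :=
  @LocallyCompactSpace X
    (@UniformSpace.toTopologicalSpace X m.toPseudoMetricSpace.toUniformSpace)

/-- `(X, m)` is a length space: the distance between any two points equals the infimum of
the lengths of continuous curves joining them. -/
def mIsLengthSpace {X : Type*} (m : MetricSpace X) : Prop :=
  ∀ x y : X,
    @edist X (@PseudoEMetricSpace.toEDist X
      (@PseudoMetricSpace.toPseudoEMetricSpace X m.toPseudoMetricSpace)) x y =
    ⨅ (γ : ℝ → X)
      (_ : @ContinuousOn ℝ X _
        (@UniformSpace.toTopologicalSpace X m.toPseudoMetricSpace.toUniformSpace)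
        γ (Set.Icc (0:ℝ) 1))
      (_ : γ 0 = x) (_ : γ 1 = y),
      @eVariationOn ℝ _ X
        (@PseudoMetricSpace.toPseudoEMetricSpace X m.toPseudoMetricSpace)
        γ (Set.Icc (0:ℝ) 1)

/-- Points just outside a closed ball are near the ball, in a length space. -/
lemma exists_near_of_length {X : Type*} (m : MetricSpace X) (hm : mIsLengthSpace m)
    (x a : X) (r ε : ℝ) (hr : 0 ≤ r) (hε : 0 < ε) (ha : mdist m a x ≤ r + ε) :
    ∃ p, mdist m p x ≤ r ∧ mdist m a p ≤ 2 * ε := by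
  let _ := m
  change dist a x ≤ r + ε at ha
  change ∃ p, dist p x ≤ r ∧ dist a p ≤ 2 * ε
  by_cases hax : dist a x ≤ r
  · exact ⟨a, hax, by simp; linarith⟩
  push Not at hax
  have h := hm x a
  have hlt : edist x a < ENNReal.ofReal (r + 2 * ε) := by
    rw [edist_dist, dist_comm]
    exact (ENNReal.ofReal_lt_ofReal_iff (by linarith)).2 (by linarith)
  rw [h] at hlt
  simp only [iInf_lt_iff] at hlt
  obtain ⟨γ, hγ, h0, h1, hl⟩ := hlt
  have hc : ContinuousOn (fun u => dist (γ u) x) (Set.Icc (0:ℝ) 1) :=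
    (continuous_id.dist continuous_const).comp_continuousOn hγ
  obtain ⟨u, hu, hur⟩ := intermediate_value_Icc zero_le_one hc
    (show r ∈ Set.Icc (dist (γ 0) x) (dist (γ 1) x) by
      rw [h0, h1]; simp; exact ⟨hr, hax.le⟩)
  simp only at hur
  refine ⟨γ u, hur.le, ?_⟩
  have hadd := eVariationOn.Icc_add_Icc γ (s := Set.Icc (0:ℝ) 1) hu.1 hu.2 hu
  have e1 : edist (γ 0) (γ u) ≤ eVariationOn γ (Set.Icc (0:ℝ) 1 ∩ Set.Icc 0 u) :=
    eVariationOn.edist_le _ ⟨by simp, by simp [hu.1]⟩ ⟨hu, by simp [hu.1]⟩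
  have e2 : edist (γ u) (γ 1) ≤ eVariationOn γ (Set.Icc (0:ℝ) 1 ∩ Set.Icc u 1) :=
    eVariationOn.edist_le _ ⟨hu, by simp [hu.2]⟩ ⟨by simp, by simp [hu.2]⟩
  have e3 : edist (γ 0) (γ u) + edist (γ u) (γ 1) < ENNReal.ofReal (r + 2 * ε) := by
    refine lt_of_le_of_lt (add_le_add e1 e2) ?_
    rw [hadd, Set.inter_self]
    exact hl
  rw [edist_dist, edist_dist, ← ENNReal.ofReal_add dist_nonneg dist_nonneg,
    ENNReal.ofReal_lt_ofReal_iff (by linarith), h0, h1, dist_comm x, hur,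
    dist_comm _ a] at e3
  linarith

lemma exists_close_aux {X : Type*} (m m' : MetricSpace X) (hm : mIsLengthSpace m)
    (hm' : mIsLengthSpace m') (ε : ℝ) (hε : 0 < ε)
    (h : ∀ a b, |mdist m a b - mdist m' a b| ≤ ε)
    (x y : X) (t s : ℝ) (ht : 0 ≤ t) (hs : 0 ≤ s) (a : X) (ha : a ∈ mClosedBall m' x t) :
    ∃ b ∈ mClosedBall m' y s, mdist m' a b ≤
      mHausdorffDist m (mClosedBall m x t) (mClosedBall m y s) + 7 * ε := by
  have ha' : mdist m' a x ≤ t := ha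
  obtain ⟨p, hp, hap⟩ := exists_near_of_length m hm x a t ε ht hε
    (by linarith [(abs_le.1 (h a x)).2])
  have hq : ∃ q, mdist m q y ≤ s ∧ mdist m p q <
      mHausdorffDist m (mClosedBall m x t) (mClosedBall m y s) + ε := by
    let _ := m
    obtain ⟨q, hq, hpq⟩ := Metric.exists_dist_lt_of_hausdorffDist_lt
      (s := Metric.closedBall x t) (t := Metric.closedBall y s) (x := p)
      (r := Metric.hausdorffDist (Metric.closedBall x t) (Metric.closedBall y s) + ε)
      hp (by linarith)
      (Metric.hausdorffEDist_ne_top_of_nonempty_of_bounded ⟨x, by simpa using ht⟩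
        ⟨y, by simpa using hs⟩ Metric.isBounded_closedBall Metric.isBounded_closedBall)
    exact ⟨q, hq, hpq⟩
  obtain ⟨q, hq, hpq⟩ := hq
  obtain ⟨b, hb, hqb⟩ := exists_near_of_length m' hm' y q s ε hs hε
    (by linarith [(abs_le.1 (h q y)).1])
  refine ⟨b, hb, ?_⟩
  have t1 : mdist m' a b ≤ mdist m' a p + mdist m' p q + mdist m' q b := by
    let _ := m'
    exact dist_triangle4 a p q b
  linarith [(abs_le.1 (h a p)).1, (abs_le.1 (h p q)).1]

lemma mHausdorffDist_le_aux {X : Type*} (m m' : MetricSpace X) (hm : mIsLengthSpace m)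
    (hm' : mIsLengthSpace m') (ε : ℝ) (hε : 0 < ε)
    (h : ∀ a b, |mdist m a b - mdist m' a b| ≤ ε)
    (x y : X) (t s : ℝ) (ht : 0 ≤ t) (hs : 0 ≤ s) :
    mHausdorffDist m' (mClosedBall m' x t) (mClosedBall m' y s) ≤
      mHausdorffDist m (mClosedBall m x t) (mClosedBall m y s) + 7 * ε := by
  have hnn : 0 ≤ mHausdorffDist m (mClosedBall m x t) (mClosedBall m y s) := by
    let _ := m
    exact Metric.hausdorffDist_nonneg
  have hcomm : mHausdorffDist m (mClosedBall m y s) (mClosedBall m x t) =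
      mHausdorffDist m (mClosedBall m x t) (mClosedBall m y s) := by
    let _ := m
    exact Metric.hausdorffDist_comm
  have A := exists_close_aux m m' hm hm' ε hε h x y t s ht hs
  have B := exists_close_aux m m' hm hm' ε hε h y x s t hs ht
  rw [hcomm] at B
  let _ := m'
  exact Metric.hausdorffDist_le_of_mem_dist (by linarith) A B

/-- If metrics `d_n` (each making `X` a locally compact length space)
converge uniformly to a metric `d` making `X` a locally compact length space, then the
Hausdorff distances between corresponding closed balls converge. -/
theorem hausdorffDist_closedBall_tendsto_of_tendstoUniformly {X : Type*}
    (D : MetricSpace X) (Dn : ℕ → MetricSpace X)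
    (hD_lc : mLocallyCompact D) (hD_len : mIsLengthSpace D)
    (hDn_lc : ∀ n, mLocallyCompact (Dn n)) (hDn_len : ∀ n, mIsLengthSpace (Dn n))
    (hconv : TendstoUniformly (fun n (p : X × X) => mdist (Dn n) p.1 p.2)
      (fun p : X × X => mdist D p.1 p.2) Filter.atTop)
    (x y : X) (t s : ℝ) (ht : 0 ≤ t) (hs : 0 ≤ s) :
    Filter.Tendsto
      (fun n => mHausdorffDist (Dn n) (mClosedBall (Dn n) x t) (mClosedBall (Dn n) y s))
      Filter.atTop
      (nhds (mHausdorffDist D (mClosedBall D x t) (mClosedBall D y s))) := by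
  rw [Metric.tendsto_atTop]
  intro ε hε
  have hu := (Metric.tendstoUniformly_iff.1 hconv) (ε / 8) (by linarith)
  obtain ⟨N, hN⟩ := Filter.eventually_atTop.1 hu
  refine ⟨N, fun n hn => ?_⟩
  have h : ∀ a b, |mdist D a b - mdist (Dn n) a b| ≤ ε / 8 := fun a b => by
    have := hN n hn (a, b)
    rw [Real.dist_eq] at this
    exact this.le
  have h1 := mHausdorffDist_le_aux D (Dn n) hD_len (hDn_len n) (ε / 8) (by linarith) h
    x y t s ht hs
  have h2 := mHausdorffDist_le_aux (Dn n) D (hDn_len n) hD_len (ε / 8) (by linarith)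
    (fun a b => by rw [abs_sub_comm]; exact h a b) x y t s ht hs
  rw [Real.dist_eq, abs_lt]
  constructor <;> linarith
end

section
/- Let (X,d_X) and (Y,d_Y) be complete, locally compact length spaces, and equip X × Y with the maximum metric d_∞((x,y),(a,b)) = max{d_X(x,a), d_Y(y,b)}. Then for all (x,y),(a,b) ∈ X × Y and t,s ≥ 0, the Hausdorff distance of closed balls in (X×Y, d_∞) satisfies d_H^∞(B̄_t(x,y), B̄_s(a,b)) = max{ d_H^X(B̄_t(x), B̄_s(a)), d_H^Y(B̄_t(y), B̄_s(b)) }, where d_H^X, d_H^Y and d_H^∞ denote the Hausdorff distances in X, Y and (X×Y, d_∞) respectively. -/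
open Metric Set

theorem aux_fst {X Y : Type*} [PseudoEMetricSpace X] [PseudoEMetricSpace Y]
    {A C : Set X} {B D : Set Y} (hB : B.Nonempty) (hD : D.Nonempty) :
    hausdorffEDist A C ≤ hausdorffEDist (A ×ˢ B) (C ×ˢ D) := by
  obtain ⟨b, hb⟩ := hB
  obtain ⟨d, hd⟩ := hD
  apply hausdorffEDist_le_of_infEDist
  · intro p hp
    refine le_trans ?_ (infEDist_le_hausdorffEDist_of_mem (show (p, b) ∈ A ×ˢ B from ⟨hp, hb⟩))
    refine le_infEDist.2 fun q hq => (infEDist_le_edist_of_mem hq.1).trans ?_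
    rw [Prod.edist_eq]
    exact le_max_left _ _
  · intro p hp
    rw [hausdorffEDist_comm]
    refine le_trans ?_ (infEDist_le_hausdorffEDist_of_mem (show (p, d) ∈ C ×ˢ D from ⟨hp, hd⟩))
    refine le_infEDist.2 fun q hq => (infEDist_le_edist_of_mem hq.1).trans ?_
    rw [Prod.edist_eq]
    exact le_max_left _ _

theorem aux_snd {X Y : Type*} [PseudoEMetricSpace X] [PseudoEMetricSpace Y]
    {A C : Set X} {B D : Set Y} (hA : A.Nonempty) (hC : C.Nonempty) :
    hausdorffEDist B D ≤ hausdorffEDist (A ×ˢ B) (C ×ˢ D) := by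
  obtain ⟨b, hb⟩ := hA
  obtain ⟨d, hd⟩ := hC
  apply hausdorffEDist_le_of_infEDist
  · intro p hp
    refine le_trans ?_ (infEDist_le_hausdorffEDist_of_mem (show (b, p) ∈ A ×ˢ B from ⟨hb, hp⟩))
    refine le_infEDist.2 fun q hq => (infEDist_le_edist_of_mem hq.2).trans ?_
    rw [Prod.edist_eq]
    exact le_max_right _ _
  · intro p hp
    rw [hausdorffEDist_comm]
    refine le_trans ?_ (infEDist_le_hausdorffEDist_of_mem (show (d, p) ∈ C ×ˢ D from ⟨hd, hp⟩))
    refine le_infEDist.2 fun q hq => (infEDist_le_edist_of_mem hq.2).trans ?_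
    rw [Prod.edist_eq]
    exact le_max_right _ _

/-- For complete, locally compact length spaces `X` and `Y`, the
Hausdorff distance between closed balls in `X × Y` with the maximum metric
(`dist ((x,y),(a,b)) = max (dist x a) (dist y b)`, the product metric of Mathlib) is the
maximum of the Hausdorff distances of the factor balls. -/
theorem hausdorffDist_closedBall_prod_max {X Y : Type*} [MetricSpace X] [MetricSpace Y]
    [CompleteSpace X] [CompleteSpace Y] [LocallyCompactSpace X] [LocallyCompactSpace Y]
    (hX : IsLengthSpace X) (hY : IsLengthSpace Y)
    (x a : X) (y b : Y) (t s : ℝ) (ht : 0 ≤ t) (hs : 0 ≤ s) :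
    Metric.hausdorffDist (closedBall ((x, y) : X × Y) t) (closedBall ((a, b) : X × Y) s) =
      max (Metric.hausdorffDist (closedBall x t) (closedBall a s))
        (Metric.hausdorffDist (closedBall y t) (closedBall b s)) := by
  have n1 : (closedBall x t).Nonempty := nonempty_closedBall.2 ht
  have n2 : (closedBall a s).Nonempty := nonempty_closedBall.2 hs
  have n3 : (closedBall y t).Nonempty := nonempty_closedBall.2 ht
  have n4 : (closedBall b s).Nonempty := nonempty_closedBall.2 hs
  have f1 := hausdorffEDist_ne_top_of_nonempty_of_bounded n1 n2
    isBounded_closedBall isBounded_closedBall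
  have f2 := hausdorffEDist_ne_top_of_nonempty_of_bounded n3 n4
    isBounded_closedBall isBounded_closedBall
  rw [← closedBall_prod_same, ← closedBall_prod_same]
  unfold Metric.hausdorffDist
  rw [← ENNReal.toReal_max f1 f2]
  congr 1
  exact le_antisymm hausdorffEDist_prod_le (max_le (aux_fst n3 n4) (aux_snd n1 n2))
end

section
/- Let (X,d) be a complete, locally compact, strongly geodesically complete length space and let G be a group of isometries of X acting properly on X, i.e. for each x ∈ X there exists r > 0 such that {g ∈ G : g(B_r(x)) ∩ B_r(x) ≠ ∅} is finite. Then the induced action of G on the space Σ(X) of compact closed balls of X (given by g · B̄_t(x) = g(B̄_t(x)) = B̄_t(g(x))), which is by isometries of the Hausdorff distance d_H, is proper: for each B̄_r(x) ∈ Σ(X) there exists R > 0 such that {g ∈ G : the d_H-ball of radius R around B̄_r(g(x)) meets the d_H-ball of radius R around B̄_r(x)} is finite. -/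
open Metric Set

theorem aux_dist_lt {X : Type*} [MetricSpace X]
    (hsgc : ∀ x : X, StrongGeodesicExtendibilityAt x) (x y : X) (s t R : ℝ) (hs : 0 ≤ s)
    (hst : s ≤ t) (h : Metric.hausdorffDist (closedBall x t) (closedBall y s) < R) :
    dist x y < R := by
  by_cases hyx : y = x
  · subst hyx
    rw [dist_self]
    exact lt_of_le_of_lt Metric.hausdorffDist_nonneg h
  have hfin : Metric.hausdorffEDist (closedBall x t) (closedBall y s) ≠ ⊤ :=
    Metric.hausdorffEDist_ne_top_of_nonempty_of_bounded
      ⟨x, mem_closedBall_self (hs.trans hst)⟩ ⟨y, mem_closedBall_self hs⟩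
      isBounded_closedBall isBounded_closedBall
  have key : ∃ p ∈ closedBall x t, dist x y + t ≤ dist y p := by
    rcases eq_or_lt_of_le (hs.trans hst) with h0 | h0
    · exact ⟨x, mem_closedBall_self h0.le, by rw [← h0, dist_comm y x]; simp⟩
    · obtain ⟨p, γ, hp, hγ, h1, h2, h3⟩ := hsgc x t h0 y hyx
      have hd : (0:ℝ) ≤ dist x y + t := by positivity
      have := hγ 0 ⟨le_rfl, hd⟩ (dist x y + t) ⟨hd, le_rfl⟩
      rw [h1, h3, zero_sub, abs_neg, abs_of_nonneg hd] at this
      exact ⟨p, by rw [mem_closedBall, dist_comm, hp], this.ge⟩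
  obtain ⟨p, hp, hyp⟩ := key
  obtain ⟨q, hq, hpq⟩ := Metric.exists_dist_lt_of_hausdorffDist_lt hp h hfin
  rw [mem_closedBall] at hq
  have := dist_triangle y q p
  rw [dist_comm y q, dist_comm q p] at this
  linarith

/-- Let `(X,d)` be a complete, locally compact, strongly geodesically
complete length space and `G` a group of isometries of `X` acting properly. Then the
induced isometric action of `G` on the space `Σ(X)` of compact closed balls with the
Hausdorff distance is proper. -/
theorem induced_action_on_balls_proper {X : Type*} [MetricSpace X] [CompleteSpace X]
    [LocallyCompactSpace X] (hX : IsLengthSpace X)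
    (hsgc : ∀ x : X, StrongGeodesicExtendibilityAt x)
    (G : Subgroup (X ≃ᵢ X))
    (hproper : ∀ x : X, ∃ r > (0:ℝ),
      {g : X ≃ᵢ X | g ∈ G ∧ ((g '' ball x r) ∩ ball x r).Nonempty}.Finite) :
    ∀ (x : X) (t : ℝ), 0 ≤ t → ∃ R > (0:ℝ),
      {g : X ≃ᵢ X | g ∈ G ∧ ∃ (y : X) (s : ℝ), 0 ≤ s ∧
        Metric.hausdorffDist (closedBall y s) (closedBall (g x) t) < R ∧
        Metric.hausdorffDist (closedBall y s) (closedBall x t) < R}.Finite := by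
  intro x t ht
  obtain ⟨r, hr, hf⟩ := hproper x
  refine ⟨r / 2, by positivity, hf.subset ?_⟩
  rintro g ⟨hg, y, s, hs, h1, h2⟩
  have key : ∀ z : X, Metric.hausdorffDist (closedBall y s) (closedBall z t) < r / 2 →
      dist y z < r / 2 := by
    intro z hz
    rcases le_total s t with h | h
    · rw [dist_comm]
      rw [Metric.hausdorffDist_comm] at hz
      exact aux_dist_lt hsgc z y s t _ hs h hz
    · exact aux_dist_lt hsgc y z t s _ ht h hz
  have k1 := key _ h1
  have k2 := key _ h2
  refine ⟨hg, g x, ⟨x, mem_ball_self hr, rfl⟩, ?_⟩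
  rw [mem_ball]
  have := dist_triangle (g x) y x
  rw [dist_comm (g x) y] at this
  linarith
end

section
/- Let (X,d) be a complete, locally compact, strongly geodesically complete length space with unique midpoints (for all p,q ∈ X there is exactly one m with d(p,m) = d(m,q) = d(p,q)/2). Then every isometry F of the space (Σ(X), d_H) of compact closed balls maps balls of equal radius to balls of equal radius: for every t ≥ 0 there exists r ≥ 0 such that F({B̄_t(x) : x ∈ X}) = {B̄_r(x) : x ∈ X}; moreover the map f : X → X determined by F(B̄_0(x)) = F({x}) = B̄_R(f(x)) is a surjective isometry of (X,d). Consequently, the natural homomorphism Isom(X,d) → Isom(Σ(X), d_H) sending f to B ↦ f(B) is a group isomorphism. -/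
open Metric Set

/-- The space `Σ(X)` of compact (closed) balls of `X`, as a set of subsets of `X`. -/
def SigmaBalls (X : Type*) [PseudoMetricSpace X] : Set (Set X) :=
  {S | ∃ (x : X) (r : ℝ), 0 ≤ r ∧ S = closedBall x r}

namespace BallAux

variable {X : Type*} [MetricSpace X]

lemma ext_point [Nontrivial X] (hsgc : ∀ x : X, StrongGeodesicExtendibilityAt x)
    (x y : X) (t : ℝ) (ht : 0 ≤ t) : ∃ p : X, dist x p = t ∧ dist y p = dist x y + t := by
  rcases ht.eq_or_lt with rfl | ht
  · exact ⟨x, by simp, by simp [dist_comm]⟩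
  by_cases hxy : y = x
  · obtain ⟨z, hz⟩ := exists_ne x
    obtain ⟨p, γ, h1, -⟩ := hsgc x t ht z hz
    exact ⟨p, h1, by simp [hxy, h1]⟩
  · obtain ⟨p, γ, h1, h2, h3, h4, h5⟩ := hsgc x t ht y hxy
    have hd : 0 ≤ dist x y := dist_nonneg
    refine ⟨p, h1, ?_⟩
    have := h2 0 ⟨le_rfl, by linarith⟩ (dist x y + t) ⟨by linarith, le_rfl⟩
    rw [h3, h5] at this
    rw [this, abs_sub_comm, sub_zero, abs_of_nonneg (by linarith)]

lemma mid_point (hsgc : ∀ x : X, StrongGeodesicExtendibilityAt x)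
    (x y : X) (a : ℝ) (ha : 0 ≤ a) (ha' : a ≤ dist x y) :
    ∃ m : X, dist x m = a ∧ dist m y = dist x y - a := by
  by_cases hxy : x = y
  · subst hxy
    have : a = 0 := by simp at ha'; linarith
    exact ⟨x, by simp [this], by simp [this]⟩
  · obtain ⟨p, γ, h1, h2, h3, h4, h5⟩ := hsgc y 1 one_pos x hxy
    rw [dist_comm y x] at h2 h4 h5
    refine ⟨γ a, ?_, ?_⟩
    · have := h2 0 ⟨le_rfl, by linarith⟩ a ⟨ha, by linarith⟩
      rw [h3] at this
      rw [this, abs_sub_comm, sub_zero, abs_of_nonneg ha]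
    · have := h2 a ⟨ha, by linarith⟩ (dist x y) ⟨by linarith, by linarith⟩
      rw [h4] at this
      rw [this, abs_sub_comm, abs_of_nonneg (by linarith)]

lemma near (hsgc : ∀ x : X, StrongGeodesicExtendibilityAt x)
    (x y : X) (t s : ℝ) (hs : 0 ≤ s) (z : X) (hz : z ∈ closedBall x t) :
    ∃ w ∈ closedBall y s, dist z w ≤ dist x y + |t - s| := by
  rw [mem_closedBall] at hz
  have h1 := le_abs_self (t - s)
  have h0 := abs_nonneg (t - s)
  have hd : 0 ≤ dist x y := dist_nonneg
  rcases le_total (dist y z) s with h | h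
  · exact ⟨z, by rwa [mem_closedBall, dist_comm], by rw [dist_self]; linarith⟩
  · obtain ⟨m, hm1, hm2⟩ := mid_point hsgc y z s hs h
    refine ⟨m, by rw [mem_closedBall, dist_comm, hm1], ?_⟩
    rw [dist_comm z m, hm2]
    have := dist_triangle y x z
    rw [dist_comm y x, dist_comm x z] at this
    linarith

lemma ne_top (x y : X) (t s : ℝ) (ht : 0 ≤ t) (hs : 0 ≤ s) :
    hausdorffEDist (closedBall x t) (closedBall y s) ≠ ⊤ :=
  hausdorffEDist_ne_top_of_nonempty_of_bounded ⟨x, mem_closedBall_self ht⟩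
    ⟨y, mem_closedBall_self hs⟩ isBounded_closedBall isBounded_closedBall

lemma lower [Nontrivial X] (hsgc : ∀ x : X, StrongGeodesicExtendibilityAt x)
    (x y : X) (t s : ℝ) (ht : 0 ≤ t) (hs : 0 ≤ s) :
    dist x y + (t - s) ≤ hausdorffDist (closedBall x t) (closedBall y s) := by
  by_contra! h
  obtain ⟨p, hp1, hp2⟩ := ext_point hsgc x y t ht
  obtain ⟨w, hw, hw'⟩ := exists_dist_lt_of_hausdorffDist_lt
    (show p ∈ closedBall x t by rw [mem_closedBall, dist_comm, hp1]) h (ne_top x y t s ht hs)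
  rw [mem_closedBall, dist_comm] at hw
  have := dist_triangle y w p
  rw [dist_comm w p] at this
  linarith

lemma hdist [Nontrivial X] (hsgc : ∀ x : X, StrongGeodesicExtendibilityAt x)
    (x y : X) (t s : ℝ) (ht : 0 ≤ t) (hs : 0 ≤ s) :
    hausdorffDist (closedBall x t) (closedBall y s) = dist x y + |t - s| := by
  apply le_antisymm
  · apply hausdorffDist_le_of_mem_dist
    · positivity
    · exact fun z hz => near hsgc x y t s hs z hz
    · intro z hz
      have := near hsgc y x s t ht z hz
      rwa [dist_comm y x, abs_sub_comm] at this
  · have h1 := lower hsgc x y t s ht hs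
    have h2 := lower hsgc y x s t hs ht
    rw [hausdorffDist_comm, dist_comm] at h2
    rcases abs_cases (t - s) with h | h <;> linarith

/-- uniqueness of midpoints in the product -/
def UM (x : X) (t : ℝ) (y : X) (s : ℝ) : Prop :=
  ∀ (m m' : X) (u u' : ℝ), 0 ≤ u → 0 ≤ u' →
    dist x m + |t - u| = (dist x y + |t - s|) / 2 →
    dist y m + |s - u| = (dist x y + |t - s|) / 2 →
    dist x m' + |t - u'| = (dist x y + |t - s|) / 2 →
    dist y m' + |s - u'| = (dist x y + |t - s|) / 2 → m = m' ∧ u = u'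

lemma um_of (hmid : ∀ p q : X, ∃! m : X, dist p m = dist p q / 2 ∧ dist m q = dist p q / 2)
    (x y : X) (t s : ℝ) (h : x = y ∨ t = s) : UM x t y s := by
  intro m m' u u' _ _ h1 h2 h3 h4
  rcases h with rfl | rfl
  · have e : ∀ (n : X) (v : ℝ), dist x n + |t - v| = (dist x x + |t - s|) / 2 →
        dist x n + |s - v| = (dist x x + |t - s|) / 2 → n = x ∧ v = (t + s) / 2 := by
      intro n v a b
      rw [dist_self] at a b
      have hd : 0 ≤ dist x n := dist_nonneg
      have h0 : dist x n = 0 := by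
        have := abs_sub_le t v s
        rw [abs_sub_comm v s] at this
        linarith
      refine ⟨(dist_eq_zero.1 h0).symm, ?_⟩
      rw [h0] at a b
      rcases abs_cases (t - s) with p | p <;> rcases abs_cases (t - v) with q | q <;>
        rcases abs_cases (s - v) with r | r <;> linarith
    obtain ⟨a, b⟩ := e m u h1 h2
    obtain ⟨c, d⟩ := e m' u' h3 h4
    exact ⟨a.trans c.symm, b.trans d.symm⟩
  · have e : ∀ (n : X) (v : ℝ), dist x n + |t - v| = (dist x y + |t - t|) / 2 →
        dist y n + |t - v| = (dist x y + |t - t|) / 2 →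
        (dist x n = dist x y / 2 ∧ dist n y = dist x y / 2) ∧ v = t := by
      intro n v a b
      rw [sub_self, abs_zero] at a b
      have := dist_triangle x n y
      rw [dist_comm y n] at b
      have h0 := abs_nonneg (t - v)
      have h00 : |t - v| = 0 := by linarith
      refine ⟨⟨by linarith, by linarith⟩, ?_⟩
      have := abs_eq_zero.1 h00
      linarith
    obtain ⟨a, b⟩ := e m u h1 h2
    obtain ⟨c, d⟩ := e m' u' h3 h4
    exact ⟨(hmid x y).unique a c, b.trans d.symm⟩

lemma of_um (hsgc : ∀ x : X, StrongGeodesicExtendibilityAt x)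
    (x y : X) (t s : ℝ) (ht : 0 ≤ t) (hs : 0 ≤ s) (h : UM x t y s) : x = y ∨ t = s := by
  by_contra! hne
  obtain ⟨h1, h2⟩ := hne
  have hd : 0 < dist x y := dist_pos.2 h1
  have hh : 0 < |t - s| := abs_pos.2 (sub_ne_zero.2 h2)
  -- midpoints with vertical fraction l
  have key : ∀ l : ℝ, 0 ≤ l → l ≤ 1 → 0 ≤ (dist x y + |t - s|) / 2 - l * |t - s| →
      (dist x y + |t - s|) / 2 - l * |t - s| ≤ dist x y →
      ∃ m : X, 0 ≤ t + l * (s - t) ∧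
        dist x m + |t - (t + l * (s - t))| = (dist x y + |t - s|) / 2 ∧
        dist y m + |s - (t + l * (s - t))| = (dist x y + |t - s|) / 2 := by
    intro l l0 l1 a0 a1
    obtain ⟨m, hm1, hm2⟩ := mid_point hsgc x y _ a0 a1
    refine ⟨m, by nlinarith [mul_nonneg l0 hs, mul_nonneg (sub_nonneg.2 l1) ht], ?_, ?_⟩
    · rw [show t - (t + l * (s - t)) = l * (t - s) by ring, abs_mul, abs_of_nonneg l0, hm1]
      ring
    · rw [show s - (t + l * (s - t)) = -((1 - l) * (t - s)) by ring, abs_neg, abs_mul,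
        abs_of_nonneg (sub_nonneg.2 l1), dist_comm, hm2]
      ring
  obtain ⟨m, hm0, hm1, hm2⟩ := key (1/2) (by norm_num) (by norm_num) (by linarith) (by linarith)
  obtain ⟨l, l0, l1, l2, l3⟩ : ∃ l : ℝ, 0 ≤ l ∧ l < 1/2 ∧
      0 ≤ (dist x y + |t - s|) / 2 - l * |t - s| ∧
      (dist x y + |t - s|) / 2 - l * |t - s| ≤ dist x y := by
    rcases le_total (|t - s|) (dist x y) with c | c
    · exact ⟨0, le_rfl, by norm_num, by linarith, by linarith⟩
    · refine ⟨(|t - s| - dist x y) / 2 / |t - s|, ?_, ?_, ?_, ?_⟩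
      · exact div_nonneg (by linarith) hh.le
      · rw [div_lt_iff₀ hh]; linarith
      · rw [div_mul_cancel₀ _ hh.ne']; linarith
      · rw [div_mul_cancel₀ _ hh.ne']; linarith
  obtain ⟨m', hm0', hm1', hm2'⟩ := key l l0 (by linarith) l2 l3
  have := (h m m' _ _ hm0 hm0' hm1 hm2 hm1' hm2').2
  have h3 : (1/2 - l) * (s - t) = 0 := by linarith
  rcases mul_eq_zero.1 h3 with h3 | h3
  · linarith
  · exact h2 (by linarith)

lemma core [Nontrivial X] (hsgc : ∀ x : X, StrongGeodesicExtendibilityAt x)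
    (hmid : ∀ p q : X, ∃! m : X, dist p m = dist p q / 2 ∧ dist m q = dist p q / 2)
    (φ : X → ℝ → X) (ρ : X → ℝ → ℝ) (hρ : ∀ x t, 0 ≤ t → 0 ≤ ρ x t)
    (H : ∀ x y t s, 0 ≤ t → 0 ≤ s →
      dist (φ x t) (φ y s) + |ρ x t - ρ y s| = dist x y + |t - s|)
    (hsurj : ∀ y s, 0 ≤ s → ∃ x t, 0 ≤ t ∧ φ x t = y ∧ ρ x t = s) :
    ∀ x t, 0 ≤ t → φ x t = φ x 0 ∧ ρ x t = t := by
  have U1 : ∀ x y t s, 0 ≤ t → 0 ≤ s → (x = y ∨ t = s) →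
      (φ x t = φ y s ∨ ρ x t = ρ y s) := by
    intro x y t s ht hs h
    have hu := um_of hmid x y t s h
    refine of_um hsgc _ _ _ _ (hρ _ _ ht) (hρ _ _ hs) ?_
    intro m m' u u' hu0 hu0' h1 h2 h3 h4
    obtain ⟨a, b, hb, rfl, rfl⟩ := hsurj m u hu0
    obtain ⟨a', b', hb', rfl, rfl⟩ := hsurj m' u' hu0'
    rw [H _ _ _ _ ht hs, H _ _ _ _ (by assumption) (by assumption)] at h1 h2 h3 h4
    obtain ⟨rfl, rfl⟩ := hu a a' b b' hb hb' h1 h2 h3 h4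
    exact ⟨rfl, rfl⟩
  have U2 : ∀ x y t s, 0 ≤ t → 0 ≤ s → (φ x t = φ y s ∨ ρ x t = ρ y s) →
      (x = y ∨ t = s) := by
    intro x y t s ht hs h
    have hu := um_of hmid _ _ _ _ h
    refine of_um hsgc _ _ _ _ ht hs ?_
    intro m m' u u' hu0 hu0' h1 h2 h3 h4
    rw [← H _ _ _ _ ht hs, ← H _ _ _ _ (by assumption) (by assumption)] at h1 h2 h3 h4
    obtain ⟨e1, e2⟩ := hu _ _ _ _ (hρ _ _ hu0) (hρ _ _ hu0') h1 h2 h3 h4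
    have := H m m' u u' hu0 hu0'
    rw [e1, e2] at this
    simp only [dist_self, sub_self, abs_zero, add_zero] at this
    have p1 : 0 ≤ dist m m' := dist_nonneg
    have p2 := abs_nonneg (u - u')
    exact ⟨dist_eq_zero.1 (by linarith), sub_eq_zero.1 (abs_eq_zero.1 (by linarith))⟩
  have same : ∀ x t, 0 ≤ t → φ x t = φ x 0 := by
    intro x a ha
    by_contra hne
    have hr : ρ x a = ρ x 0 := (U1 x x a 0 ha le_rfl (.inl rfl)).resolve_left hne
    have ha0 : a ≠ 0 := by rintro rfl; exact hne rfl
    have hall : ∀ b, 0 ≤ b → ρ x b = ρ x 0 := by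
      intro b hb
      by_contra hc
      have h1 := (U1 x x b 0 hb le_rfl (.inl rfl)).resolve_right hc
      have h2 := (U1 x x b a hb ha (.inl rfl)).resolve_right (by rwa [hr])
      exact hne (h2.symm.trans h1)
    have hiso : ∀ b c, 0 ≤ b → 0 ≤ c → dist (φ x b) (φ x c) = |b - c| := by
      intro b c hb hc
      have := H x x b c hb hc
      rw [hall b hb, hall c hc] at this
      simpa using this
    obtain ⟨p, hp1, hp2⟩ := ext_point hsgc (φ x 0) (φ x 1) 1 zero_le_one
    obtain ⟨x', b, hb, hb1, hb2⟩ := hsurj p (ρ x 0) (hρ _ _ le_rfl)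
    have hx : x' = x := by
      rcases U2 x' x b 0 hb le_rfl (.inr hb2) with h | h
      · exact h
      · rcases U2 x' x b a hb ha (.inr (hb2.trans hr.symm)) with h' | h'
        · exact h'
        · exact absurd (h'.symm.trans h) ha0
    subst hx
    rw [← hb1, hiso _ _ (by norm_num) hb] at hp1 hp2
    rw [hiso _ _ (by norm_num) (by norm_num)] at hp2
    rcases abs_cases (0 - b) with q | q <;> rcases abs_cases (1 - b) with r | r <;>
      norm_num at hp2 <;> linarith
  intro x t ht
  refine ⟨same x t ht, ?_⟩
  have hiso : ∀ b c, 0 ≤ b → 0 ≤ c → |ρ x b - ρ x c| = |b - c| := by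
    intro b c hb hc
    have := H x x b c hb hc
    rw [same x b hb, same x c hc] at this
    simpa using this
  obtain ⟨x', b, hb, hb1, hb2⟩ := hsurj (φ x 0) 0 le_rfl
  have hx : x' = x := by
    rcases U2 x' x b 0 hb le_rfl (.inl hb1) with h | h
    · exact h
    · rcases U2 x' x b 1 hb zero_le_one (.inl (hb1.trans (same x 1 zero_le_one).symm)) with h' | h'
      · exact h'
      · linarith
  subst hx
  have e : ∀ c, 0 ≤ c → ρ x' c = |c - b| := by
    intro c hc
    rw [← hiso c b hc hb, hb2, sub_zero, abs_of_nonneg (hρ _ _ hc)]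
  have h1 := hiso (2 * b) 0 (by linarith) le_rfl
  rw [e _ (by linarith), e _ le_rfl] at h1
  have hb0 : b = 0 := by
    rw [show 2 * b - b = b by ring, zero_sub, abs_neg, sub_self, abs_zero, sub_zero,
      abs_of_nonneg (by linarith)] at h1
    linarith
  rw [e t ht, hb0, sub_zero, abs_of_nonneg ht]

lemma exists_f [Nontrivial X] (hsgc : ∀ x : X, StrongGeodesicExtendibilityAt x)
    (hmid : ∀ p q : X, ∃! m : X, dist p m = dist p q / 2 ∧ dist m q = dist p q / 2)
    (F : Set X → Set X) (hFbij : Set.BijOn F (SigmaBalls X) (SigmaBalls X))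
    (hFiso : ∀ A ∈ SigmaBalls X, ∀ B ∈ SigmaBalls X,
      Metric.hausdorffDist (F A) (F B) = Metric.hausdorffDist A B) :
    ∃ f : X ≃ᵢ X, ∀ x t, 0 ≤ t → F (closedBall x t) = closedBall (f x) t := by
  have hm : ∀ (x : X) (t : ℝ), ∃ (y : X) (r : ℝ), 0 ≤ t → 0 ≤ r ∧
      F (closedBall x t) = closedBall y r := by
    intro x t
    by_cases ht : 0 ≤ t
    · obtain ⟨y, r, h1, h2⟩ := hFbij.mapsTo ⟨x, t, ht, rfl⟩
      exact ⟨y, r, fun _ => ⟨h1, h2⟩⟩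
    · exact ⟨x, 0, fun h => absurd h ht⟩
  choose φ ρ hφ using hm
  have H : ∀ x y t s, 0 ≤ t → 0 ≤ s →
      dist (φ x t) (φ y s) + |ρ x t - ρ y s| = dist x y + |t - s| := by
    intro x y t s ht hs
    rw [← hdist hsgc x y t s ht hs, ← hFiso _ ⟨x, t, ht, rfl⟩ _ ⟨y, s, hs, rfl⟩,
      (hφ x t ht).2, (hφ y s hs).2, hdist hsgc _ _ _ _ (hφ x t ht).1 (hφ y s hs).1]
  have hsurj : ∀ y s, 0 ≤ s → ∃ x t, 0 ≤ t ∧ φ x t = y ∧ ρ x t = s := by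
    intro y s hs
    obtain ⟨A, ⟨x, t, ht, rfl⟩, hA⟩ := hFbij.surjOn ⟨y, s, hs, rfl⟩
    refine ⟨x, t, ht, ?_⟩
    have h := hdist hsgc (φ x t) y (ρ x t) s (hφ x t ht).1 hs
    rw [← (hφ x t ht).2, hA, hausdorffDist_self_zero] at h
    have p1 : 0 ≤ dist (φ x t) y := dist_nonneg
    have p2 := abs_nonneg (ρ x t - s)
    exact ⟨dist_eq_zero.1 (by linarith), sub_eq_zero.1 (abs_eq_zero.1 (by linarith))⟩
  have hc := core hsgc hmid φ ρ (fun x t ht => (hφ x t ht).1) H hsurj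
  have hi : Isometry (fun x => φ x 0) := by
    refine Isometry.of_dist_eq fun x y => ?_
    have := H x y 0 0 le_rfl le_rfl
    rw [(hc x 0 le_rfl).2, (hc y 0 le_rfl).2] at this
    simpa using this
  have hs : Function.Surjective (fun x => φ x 0) := by
    intro y
    obtain ⟨x, t, ht, h1, -⟩ := hsurj y 0 le_rfl
    exact ⟨x, by rw [← h1]; exact (hc x t ht).1.symm⟩
  refine ⟨⟨Equiv.ofBijective _ ⟨hi.injective, hs⟩, hi⟩, fun x t ht => ?_⟩
  rw [(hφ x t ht).2, (hc x t ht).1, (hc x t ht).2]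
  rfl

lemma exists_f' (hsgc : ∀ x : X, StrongGeodesicExtendibilityAt x)
    (hmid : ∀ p q : X, ∃! m : X, dist p m = dist p q / 2 ∧ dist m q = dist p q / 2)
    (F : Set X → Set X) (hFbij : Set.BijOn F (SigmaBalls X) (SigmaBalls X))
    (hFiso : ∀ A ∈ SigmaBalls X, ∀ B ∈ SigmaBalls X,
      Metric.hausdorffDist (F A) (F B) = Metric.hausdorffDist A B) :
    ∃ f : X ≃ᵢ X, ∀ x t, 0 ≤ t → F (closedBall x t) = closedBall (f x) t := by
  rcases subsingleton_or_nontrivial X with hX | hX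
  · refine ⟨IsometryEquiv.refl X, fun x t ht => ?_⟩
    obtain ⟨y, r, h1, h2⟩ := hFbij.mapsTo ⟨x, t, ht, rfl⟩
    rw [h2]
    ext z
    rw [mem_closedBall, mem_closedBall, Subsingleton.elim z y, dist_self,
      Subsingleton.elim y (IsometryEquiv.refl X x), dist_self]
    exact ⟨fun _ => ht, fun _ => h1⟩
  · exact exists_f hsgc hmid F hFbij hFiso

end BallAux

/-- Let `(X,d)` be a complete, locally compact, strongly geodesically
complete length space with unique midpoints, and let `F` be an isometry of
`(Σ(X), d_H)` (a bijection of `Σ(X)` preserving the Hausdorff distance). Then: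
(i) `F` maps balls of equal radius to balls of equal radius;
(ii) the map `f : X → X` determined by `F({x}) = B̄_R(f(x))` is a surjective isometry
of `(X,d)`; and
(iii) there exists a unique isometry `f` of `X` with `F(B) = f(B)` for all `B ∈ Σ(X)`,
i.e. the natural homomorphism `Isom(X,d) → Isom(Σ(X), d_H)`, `f ↦ (B ↦ f(B))`, is a
group isomorphism. -/
theorem isom_of_ball_space {X : Type*} [MetricSpace X] [CompleteSpace X]
    [LocallyCompactSpace X] (hX : IsLengthSpace X)
    (hsgc : ∀ x : X, StrongGeodesicExtendibilityAt x)
    (hmid : ∀ p q : X, ∃! m : X, dist p m = dist p q / 2 ∧ dist m q = dist p q / 2)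
    (F : Set X → Set X) (hFbij : Set.BijOn F (SigmaBalls X) (SigmaBalls X))
    (hFiso : ∀ A ∈ SigmaBalls X, ∀ B ∈ SigmaBalls X,
      Metric.hausdorffDist (F A) (F B) = Metric.hausdorffDist A B) :
    (∀ t : ℝ, 0 ≤ t → ∃ r : ℝ, 0 ≤ r ∧
        F '' {S | ∃ x : X, S = closedBall x t} = {S | ∃ x : X, S = closedBall x r}) ∧
      (∃ R : ℝ, 0 ≤ R ∧ ∃ f : X → X,
        (∀ x : X, F {x} = closedBall (f x) R) ∧ Isometry f ∧ Function.Surjective f) ∧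
      (∃! f : X ≃ᵢ X, ∀ A ∈ SigmaBalls X, F A = f '' A) := by
  obtain ⟨f, hf⟩ := BallAux.exists_f' hsgc hmid F hFbij hFiso
  have hf0 : ∀ x, F {x} = {f x} := by
    intro x
    have := hf x 0 le_rfl
    rwa [closedBall_zero, closedBall_zero] at this
  refine ⟨?_, ⟨0, le_rfl, f, ?_, f.isometry, f.surjective⟩, f, ?_, ?_⟩
  · intro t ht
    refine ⟨t, ht, ?_⟩
    ext S
    constructor
    · rintro ⟨_, ⟨x, rfl⟩, rfl⟩
      exact ⟨f x, hf x t ht⟩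
    · rintro ⟨y, rfl⟩
      exact ⟨_, ⟨f.symm y, rfl⟩, by rw [hf _ t ht, f.apply_symm_apply]⟩
  · intro x
    rw [hf0, closedBall_zero]
  · rintro _ ⟨x, t, ht, rfl⟩
    rw [hf x t ht, f.image_closedBall]
  · intro g hg
    ext x
    have h1 := hg {x} ⟨x, 0, le_rfl, closedBall_zero.symm⟩
    rw [hf0, image_singleton] at h1
    exact (singleton_injective h1).symm
end
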